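/- Every closed PGA term is derivably equal, from the axioms PGA1–PGA4, to a closed PGA term of the form P or of the form P ; Q^ω, where P and Q are closed PGA terms in which the repetition operator does not occur. -/

import Mathlib

/-- Primitive instructions of PGA over a set `B` of basic instructions. -/
inductive PrimInstr (B : Type) : Type where
  | basic : B → PrimInstr B      -- plain basic instruction a
  | postest : B → PrimInstr B    -- positive test instruction +a
  | negtest : B → PrimInstr B    -- negative test instruction −a
  | jump : ℕ → PrimInstr B       -- forward jump instruction #l
  | halt : PrimInstr B           -- termination instruction !

/-- Closed PGA terms over a type `I` of (primitive) instructions. -/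
inductive PGA (I : Type) : Type where
  | instr : I → PGA I
  | concat : PGA I → PGA I → PGA I
  | rep : PGA I → PGA I

namespace PGA

/-- `P.pow n` is the (n+1)-fold repetition `P^(n+1)`. -/
def pow {I : Type} (P : PGA I) : ℕ → PGA I
  | 0 => P
  | n + 1 => .concat P (P.pow n)

/-- Derivable equality of closed PGA terms from the axioms PGA1–PGA4 by
equational logic. -/
inductive Eq {I : Type} : PGA I → PGA I → Prop where
  | refl (x : PGA I) : Eq x x
  | symm {x y : PGA I} : Eq x y → Eq y x
  | trans {x y z : PGA I} : Eq x y → Eq y z → Eq x z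
  | concat_congr {x x' y y' : PGA I} :
      Eq x x' → Eq y y' → Eq (.concat x y) (.concat x' y')
  | rep_congr {x y : PGA I} : Eq x y → Eq (.rep x) (.rep y)
  | pga1 (x y z : PGA I) : Eq (.concat (.concat x y) z) (.concat x (.concat y z))
  | pga2 (x : PGA I) (n : ℕ) : Eq (.rep (x.pow n)) (.rep x)
  | pga3 (x y : PGA I) : Eq (.concat (.rep x) y) (.rep x)
  | pga4 (x y : PGA I) : Eq (.rep (.concat x y)) (.concat x (.rep (.concat y x)))

/-- A closed PGA term in which the repetition operator does not occur. -/
def RepFree {I : Type} : PGA I → Prop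
  | .instr _ => True
  | .concat x y => RepFree x ∧ RepFree y
  | .rep _ => False

end PGA

theorem PGA.rep_unfold_aux {I : Type} (x : PGA I) : PGA.Eq (.rep x) (.concat x (.rep x)) :=
  have h : PGA.Eq (.rep (.concat x x)) (.rep x) := PGA.Eq.pga2 x 1
  h.symm.trans ((PGA.Eq.pga4 x x).trans (.concat_congr (.refl x) h))

theorem PGA.rep_rep_aux {I : Type} (x : PGA I) : PGA.Eq (.rep (.rep x)) (.rep x) :=
  (PGA.rep_unfold_aux (.rep x)).trans (.pga3 x _)

/-- Every closed PGA term is derivably equal, from the axioms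
PGA1–PGA4, to a closed PGA term of the form `P` or of the form `P ; Q^ω`,
where `P` and `Q` are closed PGA terms in which the repetition operator does
not occur. -/
theorem canonical_form (B : Type) (x : PGA (PrimInstr B)) :
    (∃ P : PGA (PrimInstr B), PGA.RepFree P ∧ PGA.Eq x P) ∨
    (∃ P Q : PGA (PrimInstr B), PGA.RepFree P ∧ PGA.RepFree Q ∧
      PGA.Eq x (.concat P (.rep Q))) := by
  induction x with
  | instr a => exact Or.inl ⟨.instr a, trivial, .refl _⟩
  | concat x y ihx ihy =>
    rcases ihx with ⟨P, hP, hx⟩ | ⟨P, Q, hP, hQ, hx⟩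
    · rcases ihy with ⟨R, hR, hy⟩ | ⟨R, S, hR, hS, hy⟩
      · exact Or.inl ⟨.concat P R, ⟨hP, hR⟩, .concat_congr hx hy⟩
      · exact Or.inr ⟨.concat P R, S, ⟨hP, hR⟩, hS,
          (PGA.Eq.concat_congr hx hy).trans (PGA.Eq.pga1 P R (.rep S)).symm⟩
    · exact Or.inr ⟨P, Q, hP, hQ,
        (PGA.Eq.concat_congr hx (.refl y)).trans
          ((PGA.Eq.pga1 P (.rep Q) y).trans (.concat_congr (.refl P) (.pga3 Q y)))⟩
  | rep x ih =>
    rcases ih with ⟨P, hP, hx⟩ | ⟨P, Q, hP, hQ, hx⟩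
    · exact Or.inr ⟨P, P, hP, hP, (PGA.Eq.rep_congr hx).trans (PGA.rep_unfold_aux P)⟩
    · exact Or.inr ⟨P, Q, hP, hQ,
        (PGA.Eq.rep_congr hx).trans ((PGA.Eq.pga4 P (.rep Q)).trans
          (.concat_congr (.refl P)
            ((PGA.Eq.rep_congr (.pga3 Q P)).trans (PGA.rep_rep_aux Q))))⟩
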